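/- arXiv:2509.12613 — 10 statements merged into one kernel-verified Lean document; each statement's English description precedes it below -/
import Mathlib

section
/- For every real number x ≥ 2, (x+1)^{3/2} − 2^{3/2} ≥ ((3/2)^{3/2} − 1) · x^{3/2}. -/
/-- Relation (rel_lb2): for all real `x ≥ 2`,
`(x+1)^{3/2} − 2^{3/2} ≥ ((3/2)^{3/2} − 1) x^{3/2}`. -/
theorem stmt_3 (x : ℝ) (hx : 2 ≤ x) :
    ((3 / 2 : ℝ) ^ ((3 : ℝ) / 2) - 1) * x ^ ((3 : ℝ) / 2)
      ≤ (x + 1) ^ ((3 : ℝ) / 2) - (2 : ℝ) ^ ((3 : ℝ) / 2) := by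
  have hc : (3 / 2 : ℝ) ^ ((3 : ℝ) / 2) ≤ 2 := by
    have h0 : (0 : ℝ) ≤ (3 / 2 : ℝ) ^ ((3 : ℝ) / 2) := by positivity
    have h1 : ((3 / 2 : ℝ) ^ ((3 : ℝ) / 2)) ^ 2 = 27 / 8 := by
      rw [← Real.rpow_mul_natCast (by norm_num)]
      norm_num
    nlinarith
  have hm : (3 / 2 : ℝ) ^ ((3 : ℝ) / 2) * (2 : ℝ) ^ ((3 : ℝ) / 2) = 3 ^ ((3 : ℝ) / 2) := by
    rw [← Real.mul_rpow (by norm_num) (by norm_num)]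
    norm_num
  have hmono : (2 : ℝ) ^ ((3 : ℝ) / 2) ≤ x ^ ((3 : ℝ) / 2) :=
    Real.rpow_le_rpow (by norm_num) hx (by norm_num)
  have hpos : 0 < x - 1 := by linarith
  have hl : 0 ≤ (x - 2) / (x - 1) := div_nonneg (by linarith) hpos.le
  have hr : 0 ≤ 1 / (x - 1) := by positivity
  have hs : (x - 2) / (x - 1) + 1 / (x - 1) = 1 := by field_simp; ring
  have hconv := convexOn_rpow (p := (3 : ℝ) / 2) (by norm_num)
  have ha : x + 1 ∈ Set.Ici (0 : ℝ) := by simp only [Set.mem_Ici]; linarith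
  have hb : (2 : ℝ) ∈ Set.Ici (0 : ℝ) := by simp
  have k1 := hconv.2 ha hb hl hr hs
  have k2 := hconv.2 hb ha hl hr hs
  simp only [smul_eq_mul] at k1 k2
  have e1 : (x - 2) / (x - 1) * (x + 1) + 1 / (x - 1) * 2 = x := by field_simp; ring
  have e2 : (x - 2) / (x - 1) * 2 + 1 / (x - 1) * (x + 1) = 3 := by field_simp; ring
  rw [e1] at k1
  rw [e2] at k2
  have hl' : (x - 2) / (x - 1) = 1 - 1 / (x - 1) := by linarith
  rw [hl'] at k1 k2
  nlinarith [mul_nonneg (sub_nonneg.2 hc) (sub_nonneg.2 hmono)]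
end

section
/- Let E be a real inner product space, Z ⊆ E a nonempty convex set, and h : E → ℝ. Let z ∈ Z, let d ∈ E with d ≠ 0 be a subgradient of h⁺ at z (i.e. h⁺(y) ≥ h⁺(z) + ⟨d, y − z⟩ for all y ∈ E), let β > 0, and let ẑ be a projection of z − β·(h⁺(z)/‖d‖²)·d onto Z (i.e. ẑ ∈ Z and ⟨z − β·(h⁺(z)/‖d‖²)·d − ẑ, y − ẑ⟩ ≤ 0 for all y ∈ Z). Then for every z̄ ∈ Z with h(z̄) ≤ 0, ‖ẑ − z̄‖² ≤ ‖z − z̄‖² − β(2−β)·(h⁺(z))²/‖d‖². -/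
open RealInnerProductSpace in
/-- Lemma `lemma:basiter` (one step feasibility update): if `d ≠ 0` is a subgradient of
`h⁺` at `z ∈ Z`, `β > 0`, and `ẑ` is the projection of `z − β (h⁺(z)/‖d‖²) d` onto `Z`,
then for any `z̄ ∈ Z` with `h(z̄) ≤ 0`,
`‖ẑ − z̄‖² ≤ ‖z − z̄‖² − β(2−β)(h⁺(z))²/‖d‖²`. -/
theorem stmt_4 {E : Type*} [NormedAddCommGroup E] [InnerProductSpace ℝ E]
    (Z : Set E) (hZne : Z.Nonempty) (hZconv : Convex ℝ Z)
    (h : E → ℝ) (z : E) (hz : z ∈ Z)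
    (d : E) (hd : d ≠ 0)
    (hsub : ∀ y : E, max (h z) 0 + ⟪d, y - z⟫ ≤ max (h y) 0)
    (β : ℝ) (hβ : 0 < β)
    (zhat : E) (hzhatZ : zhat ∈ Z)
    (hproj : ∀ y ∈ Z, ⟪z - (β * (max (h z) 0 / ‖d‖ ^ 2)) • d - zhat, y - zhat⟫ ≤ 0)
    (zbar : E) (hzbar : zbar ∈ Z) (hzbarneg : h zbar ≤ 0) :
    ‖zhat - zbar‖ ^ 2 ≤ ‖z - zbar‖ ^ 2 - β * (2 - β) * (max (h z) 0) ^ 2 / ‖d‖ ^ 2 := by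
  have h1 := hproj zbar hzbar
  have h2 := hsub zbar
  rw [max_eq_right hzbarneg] at h2
  have hm : 0 ≤ max (h z) 0 := le_max_right _ _
  generalize max (h z) 0 = m at *
  have hn : 0 < ‖d‖ ^ 2 := by positivity
  have ht : 0 ≤ β * (m / ‖d‖ ^ 2) := by positivity
  have htn : β * (m / ‖d‖ ^ 2) * ‖d‖ ^ 2 = β * m := by field_simp
  have hfin : β * (2 - β) * m ^ 2 / ‖d‖ ^ 2 = (2 - β) * m * (β * (m / ‖d‖ ^ 2)) := by
    field_simp
  rw [hfin]
  generalize β * (m / ‖d‖ ^ 2) = t at *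
  have e1 : ‖z - t • d - zbar‖ ^ 2 = ‖z - t • d - zhat‖ ^ 2
      - 2 * ⟪z - t • d - zhat, zbar - zhat⟫ + ‖zhat - zbar‖ ^ 2 := by
    rw [norm_sub_rev zhat zbar, ← norm_sub_sq_real]
    congr 2
    abel
  have e2 : ‖z - t • d - zbar‖ ^ 2 = ‖z - zbar‖ ^ 2 + 2 * (t * ⟪d, zbar - z⟫)
      + t * (t * ‖d‖ ^ 2) := by
    have : z - t • d - zbar = -((zbar - z) + t • d) := by abel
    rw [this, norm_neg, norm_add_sq_real, inner_smul_right, real_inner_comm, norm_smul,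
      norm_sub_rev z zbar, mul_pow, Real.norm_eq_abs, sq_abs]
    ring
  rw [htn] at e2
  have h3 : t * (m + ⟪d, zbar - z⟫) ≤ 0 := mul_nonpos_of_nonneg_of_nonpos ht h2
  nlinarith [sq_nonneg ‖z - t • d - zhat‖]
end

section
/- Let E be a real inner product space, Y ⊆ E a nonempty convex set, S ⊆ Y a nonempty set, and g : E → ℝ with g(x) ≤ 0 for all x ∈ S. Let 0 < β < 2, let M_g > 0, let z ∈ Y, let d ≠ 0 be a subgradient of g⁺ at z with ‖d‖ ≤ M_g, and let ẑ be a projection of z − β·(g⁺(z)/‖d‖²)·d onto Y. Then dist(ẑ, S)² ≤ dist(z, S)² − (β(2−β)/M_g²)·(g⁺(z))². -/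
open RealInnerProductSpace in
/-- One step feasibility update in terms of distances to `S ⊆ Y`:
`dist(ẑ, S)² ≤ dist(z, S)² − (β(2−β)/M_g²)(g⁺(z))²`. -/
theorem stmt_5 {E : Type*} [NormedAddCommGroup E] [InnerProductSpace ℝ E]
    (Y : Set E) (hYne : Y.Nonempty) (hYconv : Convex ℝ Y)
    (S : Set E) (hSY : S ⊆ Y) (hSne : S.Nonempty)
    (g : E → ℝ) (hg : ∀ x ∈ S, g x ≤ 0)
    (β Mg : ℝ) (hβ0 : 0 < β) (hβ2 : β < 2) (hMg : 0 < Mg)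
    (z : E) (hz : z ∈ Y)
    (d : E) (hd : d ≠ 0)
    (hsub : ∀ y : E, max (g z) 0 + ⟪d, y - z⟫ ≤ max (g y) 0)
    (hdnorm : ‖d‖ ≤ Mg)
    (zhat : E) (hzhatY : zhat ∈ Y)
    (hproj : ∀ y ∈ Y, ⟪z - (β * (max (g z) 0 / ‖d‖ ^ 2)) • d - zhat, y - zhat⟫ ≤ 0) :
    Metric.infDist zhat S ^ 2
      ≤ Metric.infDist z S ^ 2 - β * (2 - β) / Mg ^ 2 * (max (g z) 0) ^ 2 := by
  set G := max (g z) 0 with hG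
  have hG0 : 0 ≤ G := le_max_right _ _
  have hdpos : 0 < ‖d‖ := norm_pos_iff.mpr hd
  set t := β * (G / ‖d‖ ^ 2) with ht
  have ht0 : 0 ≤ t := by positivity
  have htd : t * ‖d‖ ^ 2 = β * G := by
    rw [ht]; field_simp
  have hc : β * (2 - β) / Mg ^ 2 * G ^ 2 ≤ t * (2 - β) * G := by
    have h1 : β * (2 - β) / Mg ^ 2 ≤ β * (2 - β) / ‖d‖ ^ 2 := by
      have : 0 ≤ β * (2 - β) := mul_nonneg hβ0.le (by linarith)
      gcongr
    calc β * (2 - β) / Mg ^ 2 * G ^ 2 ≤ β * (2 - β) / ‖d‖ ^ 2 * G ^ 2 := by gcongr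
      _ = t * (2 - β) * G := by rw [ht]; ring
  have hc0 : 0 ≤ β * (2 - β) / Mg ^ 2 * G ^ 2 := by
    have : 0 ≤ β * (2 - β) := mul_nonneg hβ0.le (by linarith)
    positivity
  have key : ∀ y ∈ S,
      Metric.infDist zhat S ^ 2 + β * (2 - β) / Mg ^ 2 * G ^ 2 ≤ dist z y ^ 2 := by
    intro y hy
    have h1 := hproj y (hSY hy)
    have h2 := hsub y
    rw [max_eq_right (hg y hy)] at h2
    have h3 : Metric.infDist zhat S ^ 2 ≤ ‖y - zhat‖ ^ 2 := by
      have h := Metric.infDist_le_dist_of_mem (x := zhat) hy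
      rw [dist_comm, dist_eq_norm] at h
      have := Metric.infDist_nonneg (x := zhat) (s := S)
      gcongr
    have h4 : ‖(z - t • d - zhat) - (y - zhat)‖ ^ 2 = ‖z - t • d - zhat‖ ^ 2
        - 2 * ⟪z - t • d - zhat, y - zhat⟫ + ‖y - zhat‖ ^ 2 := norm_sub_sq_real _ _
    have h5 : ‖(z - t • d - zhat) - (y - zhat)‖ ^ 2
        = ‖y - z‖ ^ 2 + 2 * (t * ⟪d, y - z⟫) + t * (t * ‖d‖ ^ 2) := by
      have : (z - t • d - zhat) - (y - zhat) = -((y - z) + t • d) := by abel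
      rw [this, norm_neg, norm_add_sq_real, inner_smul_right, norm_smul, mul_pow,
        real_inner_comm, Real.norm_eq_abs, sq_abs]
      ring
    rw [htd] at h5
    have h6 : t * ⟪d, y - z⟫ ≤ t * (-G) := mul_le_mul_of_nonneg_left (by linarith) ht0
    rw [dist_comm, dist_eq_norm]
    nlinarith [sq_nonneg ‖z - t • d - zhat‖]
  have h7 : √(Metric.infDist zhat S ^ 2 + β * (2 - β) / Mg ^ 2 * G ^ 2)
      ≤ Metric.infDist z S := by
    rw [Metric.le_infDist hSne]
    intro y hy
    exact Real.sqrt_le_iff.mpr ⟨dist_nonneg, key y hy⟩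
  have h8 := (Real.sqrt_le_iff.mp h7).2
  linarith
end

section
/- Let E be a real inner product space, Y ⊆ E a nonempty convex set, N ≥ 1 a natural number, and g_1, …, g_N : E → ℝ. Let 0 < β < 2 and M_g > 0. Let z^0, z^1, …, z^N ∈ Y be such that for each i = 1, …, N there is d_i ≠ 0, a subgradient of g_i⁺ at z^{i−1} with ‖d_i‖ ≤ M_g, and z^i is a projection of z^{i−1} − β·(g_i⁺(z^{i−1})/‖d_i‖²)·d_i onto Y. Then for every x ∈ Y satisfying g_i(x) ≤ 0 for all i = 1, …, N, one has ‖z^N − x‖² ≤ ‖z^0 − x‖² − (β(2−β)/M_g²) · Σ_{i=1}^N (g_i⁺(z^{i−1}))². -/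
open RealInnerProductSpace in
theorem step_aux {E : Type*} [NormedAddCommGroup E] [InnerProductSpace ℝ E]
    (β Mg G : ℝ) (hβ0 : 0 < β) (hβ2 : β < 2) (hG : 0 ≤ G)
    (a b d x : E) (hd : d ≠ 0) (hdn : ‖d‖ ≤ Mg)
    (hs : G + ⟪d, x - a⟫ ≤ 0)
    (hp : ⟪a - (β * (G / ‖d‖ ^ 2)) • d - b, x - b⟫ ≤ 0) :
    ‖b - x‖ ^ 2 ≤ ‖a - x‖ ^ 2 - β * (2 - β) / Mg ^ 2 * G ^ 2 := by
  have hn : 0 < ‖d‖ := norm_pos_iff.mpr hd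
  obtain ⟨t, ht⟩ : ∃ t, t = β * (G / ‖d‖ ^ 2) := ⟨_, rfl⟩
  have ht0 : 0 ≤ t := by rw [ht]; positivity
  have htd : t * ‖d‖ ^ 2 = β * G := by rw [ht]; field_simp
  rw [← ht] at hp
  have h1 : ‖(a - t • d) - x‖ ^ 2 = ‖a - t • d - b‖ ^ 2
      - 2 * ⟪a - t • d - b, x - b⟫ + ‖b - x‖ ^ 2 := by
    rw [norm_sub_rev b x, ← norm_sub_sq_real]
    congr 2; abel
  have h2 : ‖(a - t • d) - x‖ ^ 2 = ‖a - x‖ ^ 2 + 2 * (t * ⟪d, x - a⟫) + t ^ 2 * ‖d‖ ^ 2 := by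
    have e : (a - t • d) - x = (a - x) - t • d := by abel
    have e2 : ⟪d, x - a⟫ = - ⟪a - x, d⟫ := by
      rw [← neg_sub a x, inner_neg_right, real_inner_comm]
    rw [e, norm_sub_sq_real, inner_smul_right, norm_smul, mul_pow, e2, Real.norm_eq_abs, sq_abs]
    ring
  have h3 : t * ⟪d, x - a⟫ ≤ - (t * G) := by nlinarith
  have h4 : t ^ 2 * ‖d‖ ^ 2 = t * (β * G) := by rw [← htd]; ring
  have h5 : β * (2 - β) / Mg ^ 2 * G ^ 2 ≤ β * (2 - β) / ‖d‖ ^ 2 * G ^ 2 := by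
    have : 0 ≤ β * (2 - β) := mul_nonneg hβ0.le (by linarith)
    gcongr
  have h6 : β * (2 - β) / ‖d‖ ^ 2 * G ^ 2 = 2 * (t * G) - t * (β * G) := by
    rw [ht]; ring
  nlinarith [sq_nonneg ‖a - t • d - b‖]

open RealInnerProductSpace in
/-- First relation of Theorem `thm_inf_updates`: after `N` random feasibility steps,
`‖z^N − x‖² ≤ ‖z^0 − x‖² − (β(2−β)/M_g²) ∑_{i=1}^N (g_i⁺(z^{i−1}))²`
for every `x ∈ Y` with `g_i(x) ≤ 0` for all `i = 1, …, N`. -/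
theorem stmt_6 {E : Type*} [NormedAddCommGroup E] [InnerProductSpace ℝ E]
    (Y : Set E) (hYne : Y.Nonempty) (hYconv : Convex ℝ Y)
    (N : ℕ) (hN : 1 ≤ N)
    (g : ℕ → E → ℝ)
    (β Mg : ℝ) (hβ0 : 0 < β) (hβ2 : β < 2) (hMg : 0 < Mg)
    (z : ℕ → E) (hzY : ∀ i ≤ N, z i ∈ Y)
    (d : ℕ → E)
    (hd : ∀ i ∈ Finset.Icc 1 N, d i ≠ 0)
    (hdnorm : ∀ i ∈ Finset.Icc 1 N, ‖d i‖ ≤ Mg)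
    (hsub : ∀ i ∈ Finset.Icc 1 N, ∀ y : E,
      max (g i (z (i - 1))) 0 + ⟪d i, y - z (i - 1)⟫ ≤ max (g i y) 0)
    (hproj : ∀ i ∈ Finset.Icc 1 N, ∀ y ∈ Y,
      ⟪z (i - 1) - (β * (max (g i (z (i - 1))) 0 / ‖d i‖ ^ 2)) • d i - z i, y - z i⟫ ≤ 0)
    (x : E) (hx : x ∈ Y) (hgx : ∀ i ∈ Finset.Icc 1 N, g i x ≤ 0) :
    ‖z N - x‖ ^ 2 ≤ ‖z 0 - x‖ ^ 2
      - β * (2 - β) / Mg ^ 2 * ∑ i ∈ Finset.Icc 1 N, (max (g i (z (i - 1))) 0) ^ 2 := by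
  have key : ∀ n ≤ N, ‖z n - x‖ ^ 2 ≤ ‖z 0 - x‖ ^ 2
      - β * (2 - β) / Mg ^ 2 * ∑ i ∈ Finset.Icc 1 n, (max (g i (z (i - 1))) 0) ^ 2 := by
    intro n
    induction n with
    | zero => simp
    | succ k ih =>
      intro hk
      have hm : k + 1 ∈ Finset.Icc 1 N := Finset.mem_Icc.mpr ⟨by omega, hk⟩
      have hs := hsub _ hm x
      rw [max_eq_right (hgx _ hm)] at hs
      have h := step_aux β Mg _ hβ0 hβ2 (le_max_right _ _) _ _ _ x (hd _ hm) (hdnorm _ hm) hs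
        (hproj _ hm x hx)
      rw [Finset.sum_Icc_succ_top (by omega), mul_add]
      have := ih (by omega)
      simp only [Nat.add_sub_cancel] at h ⊢
      linarith
  exact key N le_rfl
end

section
/- Let E be a real inner product space, S ⊆ E a nonempty convex set, α ∈ ℝ, b ∈ E, h ∈ E, and let h' be a projection of h − α·b onto S. Then for all x ∈ S, 2α⟨b, h − x⟩ ≤ ‖h − x‖² − ‖h' − x‖² + α²‖b‖². -/
open RealInnerProductSpace in
/-- Lemma `lem_new_seq`: if `h'` is the projection of `h − α b` onto `S`, then for all
`x ∈ S`, `2α⟨b, h − x⟩ ≤ ‖h − x‖² − ‖h' − x‖² + α²‖b‖²`. -/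
theorem stmt_7 {E : Type*} [NormedAddCommGroup E] [InnerProductSpace ℝ E]
    (S : Set E) (hSne : S.Nonempty) (hSconv : Convex ℝ S)
    (α : ℝ) (b h h' : E) (hh' : h' ∈ S)
    (hproj : ∀ y ∈ S, ⟪h - α • b - h', y - h'⟫ ≤ 0) :
    ∀ x ∈ S, 2 * α * ⟪b, h - x⟫ ≤ ‖h - x‖ ^ 2 - ‖h' - x‖ ^ 2 + α ^ 2 * ‖b‖ ^ 2 := by
  intro x hx
  have h1 := hproj x hx
  have e1 := norm_sub_sq_real (h - x) (α • b)
  have e2 := norm_sub_sq_real (h - α • b - h') (x - h')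
  have e3 : h - α • b - h' - (x - h') = h - x - α • b := by abel
  rw [e3] at e2
  rw [real_inner_smul_right, real_inner_comm, norm_smul, mul_pow, Real.norm_eq_abs,
    sq_abs] at e1
  rw [norm_sub_rev x h'] at e2
  nlinarith [sq_nonneg ‖h - α • b - h'‖]
end

section
/- Let E be a real inner product space, Y ⊆ E a nonempty convex set, and F : E → E with (L, M)-growth on Y. Let x_k ∈ Y, α > 0, G₁, G₂ ∈ E, let u be a projection of x_k − α·G₁ onto Y, let v be a projection of x_k − α·G₂ onto Y, and set b₁ = F(x_k) − G₁ and b₂ = F(u) − G₂. Then for all x ∈ Y and all constants w₁, w₂, w₃ > 0: ‖v − x‖² ≤ ‖x_k − x‖² + 2α⟨b₂, u − x⟩ + 2α⟨F(u), x − u⟩ + (2α²/w₁)(‖b₂‖² + ‖b₁‖²) + (2M²α²)/w₃ − (1 − 2L²α²/w₂)‖x_k − u‖² − (1 − (2w₁ + w₂ + w₃)/2)‖v − u‖². -/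
/-- Weighted Young inequality. -/
theorem young_aux (a d w : ℝ) (hw : 0 < w) : 2 * a * d ≤ 2 * a ^ 2 / w + w / 2 * d ^ 2 := by
  have h : 2 * a ^ 2 / w + w / 2 * d ^ 2 - 2 * a * d = (2 * a - w * d) ^ 2 / (2 * w) := by
    field_simp
    ring
  have h2 : 0 ≤ (2 * a - w * d) ^ 2 / (2 * w) := by positivity
  linarith

open RealInnerProductSpace in
/-- Lemma `lem_Kor1`: one iteration of the modified stochastic Korpelevich method, with
`b₁ = F(x_k) − G₁`, `b₂ = F(u) − G₂`. -/
theorem stmt_8 {E : Type*} [NormedAddCommGroup E] [InnerProductSpace ℝ E]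
    (Y : Set E) (hYne : Y.Nonempty) (hYconv : Convex ℝ Y)
    (F : E → E) (L M : ℝ) (hL : 0 < L) (hM : 0 ≤ M)
    (hgrowth : ∀ x ∈ Y, ∀ y ∈ Y, ‖F x - F y‖ ≤ L * ‖x - y‖ + M)
    (xk : E) (hxk : xk ∈ Y)
    (α : ℝ) (hα : 0 < α)
    (G₁ G₂ : E)
    (u : E) (hu : u ∈ Y)
    (huproj : ∀ y ∈ Y, ⟪xk - α • G₁ - u, y - u⟫ ≤ 0)
    (v : E) (hv : v ∈ Y)
    (hvproj : ∀ y ∈ Y, ⟪xk - α • G₂ - v, y - v⟫ ≤ 0)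
    (x : E) (hx : x ∈ Y)
    (w₁ w₂ w₃ : ℝ) (hw₁ : 0 < w₁) (hw₂ : 0 < w₂) (hw₃ : 0 < w₃) :
    ‖v - x‖ ^ 2 ≤ ‖xk - x‖ ^ 2 + 2 * α * ⟪F u - G₂, u - x⟫
      + 2 * α * ⟪F u, x - u⟫
      + 2 * α ^ 2 / w₁ * (‖F u - G₂‖ ^ 2 + ‖F xk - G₁‖ ^ 2)
      + 2 * M ^ 2 * α ^ 2 / w₃
      - (1 - 2 * L ^ 2 * α ^ 2 / w₂) * ‖xk - u‖ ^ 2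
      - (1 - (2 * w₁ + w₂ + w₃) / 2) * ‖v - u‖ ^ 2 := by
  have h1 := huproj v hv
  have h2 := hvproj x hx
  have key : ‖v - x‖ ^ 2 = ‖xk - x‖ ^ 2 - ‖xk - u‖ ^ 2 - ‖v - u‖ ^ 2
      + 2 * α * ⟪F u - G₂, u - x⟫ + 2 * α * ⟪F u, x - u⟫
      + 2 * α * (⟪F u - G₂, v - u⟫ - ⟪F xk - G₁, v - u⟫ + ⟪F xk - F u, v - u⟫)
      + 2 * ⟪xk - α • G₁ - u, v - u⟫ + 2 * ⟪xk - α • G₂ - v, x - v⟫ := by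
    simp only [← real_inner_self_eq_norm_sq, inner_sub_left, inner_sub_right,
      real_inner_smul_left]
    rw [real_inner_comm x v, real_inner_comm x xk, real_inner_comm u xk, real_inner_comm u v,
      real_inner_comm v xk]
    ring
  have c1 : ⟪F u - G₂, v - u⟫ ≤ ‖F u - G₂‖ * ‖v - u‖ := real_inner_le_norm _ _
  have c2 : -⟪F xk - G₁, v - u⟫ ≤ ‖F xk - G₁‖ * ‖v - u‖ :=
    (neg_le_abs _).trans (abs_real_inner_le_norm _ _)
  have c3 : ⟪F xk - F u, v - u⟫ ≤ (L * ‖xk - u‖ + M) * ‖v - u‖ :=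
    (real_inner_le_norm _ _).trans
      (mul_le_mul_of_nonneg_right (hgrowth xk hxk u hu) (norm_nonneg _))
  have c := mul_le_mul_of_nonneg_left (add_le_add (add_le_add c1 c2) c3)
    (by positivity : 0 ≤ 2 * α)
  have y1 := young_aux (α * ‖F u - G₂‖) ‖v - u‖ w₁ hw₁
  have y2 := young_aux (α * ‖F xk - G₁‖) ‖v - u‖ w₁ hw₁
  have y3 := young_aux (α * L * ‖xk - u‖) ‖v - u‖ w₂ hw₂
  have y4 := young_aux (α * M) ‖v - u‖ w₃ hw₃
  rw [key]
  ring_nf at c y1 y2 y3 y4 h1 h2 ⊢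
  linarith
end

section
/- Let E be a real inner product space, Y ⊆ E a nonempty convex set, S ⊆ Y a nonempty convex set, and F : E → E monotone on Y. Let x ∈ S, u ∈ Y, x_k ∈ Y, α > 0, ζ > 0, w₄ > 0, and let p be a projection of x_k onto S. Then 2α⟨F(u), x − u⟩ ≤ 2α⟨F(x), x − p⟩ + (1/ζ + 1/w₄)·‖F(x)‖²·α² + ζ·‖x_k − p‖² + w₄·‖u − x_k‖². -/
open RealInnerProductSpace in
/-- Relation (split_for_dg): for a monotone `F` and `p` the projection of `x_k` onto `S`,
`2α⟨F(u), x − u⟩ ≤ 2α⟨F(x), x − p⟩ + (1/ζ + 1/w₄)‖F(x)‖²α² + ζ‖x_k − p‖² + w₄‖u − x_k‖²`. -/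
theorem stmt_9 {E : Type*} [NormedAddCommGroup E] [InnerProductSpace ℝ E]
    (Y : Set E) (hYne : Y.Nonempty) (hYconv : Convex ℝ Y)
    (S : Set E) (hSY : S ⊆ Y) (hSne : S.Nonempty) (hSconv : Convex ℝ S)
    (F : E → E)
    (hmono : ∀ x ∈ Y, ∀ y ∈ Y, 0 ≤ ⟪F x - F y, x - y⟫)
    (x : E) (hx : x ∈ S)
    (u : E) (hu : u ∈ Y)
    (xk : E) (hxk : xk ∈ Y)
    (α ζ w₄ : ℝ) (hα : 0 < α) (hζ : 0 < ζ) (hw₄ : 0 < w₄)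
    (p : E) (hp : p ∈ S) (hpproj : ∀ y ∈ S, ⟪xk - p, y - p⟫ ≤ 0) :
    2 * α * ⟪F u, x - u⟫ ≤ 2 * α * ⟪F x, x - p⟫
      + (1 / ζ + 1 / w₄) * ‖F x‖ ^ 2 * α ^ 2
      + ζ * ‖xk - p‖ ^ 2 + w₄ * ‖u - xk‖ ^ 2 := by
  have key : ∀ (z : ℝ) (a v : E), 0 < z →
      -(2 * α * ⟪a, v⟫) ≤ 1 / z * ‖a‖ ^ 2 * α ^ 2 + z * ‖v‖ ^ 2 := by
    intro z a v hz
    have h1 : -(‖a‖ * ‖v‖) ≤ ⟪a, v⟫ := neg_le_of_abs_le (abs_real_inner_le_norm a v)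
    have h2 : 0 ≤ 1 / z * (α * ‖a‖ - z * ‖v‖) ^ 2 := by positivity
    have h3 : 1 / z * (α * ‖a‖ - z * ‖v‖) ^ 2
        = 1 / z * ‖a‖ ^ 2 * α ^ 2 + z * ‖v‖ ^ 2 - 2 * α * (‖a‖ * ‖v‖) := by
      field_simp
      ring
    have h4 := mul_le_mul_of_nonneg_left h1 (by positivity : 0 ≤ 2 * α)
    linarith
  have h1 := key ζ (F x) (xk - p) hζ
  have h2 := key w₄ (F x) (u - xk) hw₄
  have h3 := mul_nonneg (by positivity : 0 ≤ 2 * α) (hmono x (hSY hx) u hu)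
  simp only [inner_sub_left, inner_sub_right] at h1 h2 h3 ⊢
  linarith
end

section
/- Let E be a real inner product space, Y ⊆ E a nonempty convex set, S ⊆ Y a nonempty convex set, and F : E → E monotone on Y and with (L, M)-growth on Y. Let constants ζ > 0, 0 < w₄ < 1, 0 < β < 2, M_g > 0, and step size α with 0 < α ≤ √(1−w₄)/(√2·L). Let N ≥ 1 and g_1, …, g_N : E → ℝ with g_i(x) ≤ 0 for all x ∈ S and all i. Let v_k ∈ Y, and let z^0 = v_k, z^1, …, z^N ∈ Y be such that for each i = 1, …, N there is d_i ≠ 0, a subgradient of g_i⁺ at z^{i−1} with ‖d_i‖ ≤ M_g, and z^i is a projection of z^{i−1} − β·(g_i⁺(z^{i−1})/‖d_i‖²)·d_i onto Y; set x_k = z^N. Let G₁, G₂ ∈ E; let u_{k+1} be a projection of x_k − α·G₁ onto Y and v_{k+1} a projection of x_k − α·G₂ onto Y; set b₁ = F(x_k) − G₁ and b₂ = F(u_{k+1}) − G₂. Let h_k ∈ S, let h_{k+1} be a projection of h_k − α·b₂ onto S, and let p_k be a projection of x_k onto S. Then for all x ∈ S: 2α⟨F(x), p_k − x⟩ ≤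 ‖v_k − x‖² − ‖v_{k+1} − x‖² + ‖h_k − x‖² − ‖h_{k+1} − x‖² − (β(2−β)/M_g²)·Σ_{i=1}^N (g_i⁺(z^{i−1}))² + ζ·‖x_k − p_k‖² + 2α⟨b₂, u_{k+1} − h_k⟩ + [ (1/ζ + 1/w₄)·‖F(x)‖² + 6M² + 7‖b₂‖² + 6‖b₁‖² ]·α². -/
open RealInnerProductSpace in
lemma aux_key {E : Type*} [NormedAddCommGroup E] [InnerProductSpace ℝ E]
    (p q r G₁ G₂ : E) (α : ℝ)
    (h1 : ⟪p - α • G₁, q⟫ ≤ 0) (h2 : ⟪p - α • G₂ - q, r - q⟫ ≤ 0) :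
    ‖q - r‖ ^ 2 ≤ ‖p - r‖ ^ 2 - ‖p‖ ^ 2 + α ^ 2 * ‖G₁ - G₂‖ ^ 2 + 2 * α * ⟪G₂, r⟫ := by
  have h3 : 0 ≤ ‖q - α • (G₁ - G₂)‖ ^ 2 := sq_nonneg _
  simp only [← real_inner_self_eq_norm_sq, inner_sub_left, inner_sub_right,
    real_inner_smul_left, real_inner_smul_right] at *
  simp only [real_inner_comm p q, real_inner_comm p r, real_inner_comm q r,
    real_inner_comm G₁ G₂, real_inner_comm q G₁, real_inner_comm q G₂] at *
  nlinarith

open RealInnerProductSpace in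
lemma aux_h {E : Type*} [NormedAddCommGroup E] [InnerProductSpace ℝ E]
    (p r b : E) (α : ℝ)
    (h1 : ⟪-(α • b) - p, r - p⟫ ≤ 0) :
    -(2 * α * ⟪b, r⟫) ≤ ‖r‖ ^ 2 - ‖p - r‖ ^ 2 + α ^ 2 * ‖b‖ ^ 2 := by
  have h3 : 0 ≤ ‖p + α • b‖ ^ 2 := sq_nonneg _
  simp only [← real_inner_self_eq_norm_sq, inner_sub_left, inner_sub_right, inner_add_left,
    inner_add_right, inner_neg_left, real_inner_smul_left, real_inner_smul_right] at *
  simp only [real_inner_comm p r, real_inner_comm p b, real_inner_comm r b] at *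
  nlinarith

open RealInnerProductSpace in
lemma aux_young {E : Type*} [NormedAddCommGroup E] [InnerProductSpace ℝ E]
    (a b : E) (α c : ℝ) (hc : 0 < c) :
    2 * α * ⟪a, b⟫ ≤ c * ‖b‖ ^ 2 + 1 / c * ‖a‖ ^ 2 * α ^ 2 := by
  have h3 : 0 ≤ 1 / c * ‖c • b - α • a‖ ^ 2 := by positivity
  have e : 1 / c * ‖c • b - α • a‖ ^ 2
      = c * ‖b‖ ^ 2 + 1 / c * ‖a‖ ^ 2 * α ^ 2 - 2 * α * ⟪a, b⟫ := by
    simp only [← real_inner_self_eq_norm_sq, inner_sub_left, inner_sub_right,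
      real_inner_smul_left, real_inner_smul_right, real_inner_comm a b]
    field_simp
    ring
  linarith

open RealInnerProductSpace in
lemma aux_feas {E : Type*} [NormedAddCommGroup E] [InnerProductSpace ℝ E]
    (a b d x : E) (γ β Mg : ℝ) (hγ : 0 ≤ γ) (hβ0 : 0 < β) (hβ2 : β < 2) (hMg : 0 < Mg)
    (hd : d ≠ 0) (hdn : ‖d‖ ≤ Mg) (hs : γ + ⟪d, x - a⟫ ≤ 0)
    (hp : ⟪a - (β * (γ / ‖d‖ ^ 2)) • d - b, x - b⟫ ≤ 0) :
    ‖b - x‖ ^ 2 ≤ ‖a - x‖ ^ 2 - β * (2 - β) / Mg ^ 2 * γ ^ 2 := by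
  have hdp : 0 < ‖d‖ := norm_pos_iff.2 hd
  obtain ⟨t, ht⟩ : ∃ t, t = β * (γ / ‖d‖ ^ 2) := ⟨_, rfl⟩
  rw [← ht] at hp
  have ht0 : 0 ≤ t := by rw [ht]; positivity
  have h1 : ‖b - x‖ ^ 2 ≤ ‖a - x‖ ^ 2 + 2 * t * ⟪d, x - a⟫ + t ^ 2 * ‖d‖ ^ 2 := by
    have h3 : 0 ≤ ‖a - t • d - b‖ ^ 2 := sq_nonneg _
    have e1 : b - x = (a - x) - t • d - (a - t • d - b) := by abel
    have e2 : x - b = (a - t • d - b) - ((a - x) - t • d) := by abel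
    have e3 : x - a = -(a - x) := by abel
    rw [e2] at hp
    rw [e1, e3]
    generalize a - t • d - b = m at *
    generalize a - x = n at *
    simp only [← real_inner_self_eq_norm_sq, inner_sub_left, inner_sub_right,
      inner_neg_right, real_inner_smul_left, real_inner_smul_right] at *
    have := real_inner_comm m n
    have := real_inner_comm m d
    have := real_inner_comm n d
    simp only [real_inner_comm m n, real_inner_comm m d, real_inner_comm n d] at *
    nlinarith
  have h2 : 2 * t * ⟪d, x - a⟫ ≤ 2 * t * (-γ) :=
    mul_le_mul_of_nonneg_left (by linarith) (by positivity)
  have h3 : 2 * t * (-γ) + t ^ 2 * ‖d‖ ^ 2 = - (β * (2 - β) / ‖d‖ ^ 2 * γ ^ 2) := by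
    rw [ht]; field_simp; ring
  have h4 : β * (2 - β) / Mg ^ 2 * γ ^ 2 ≤ β * (2 - β) / ‖d‖ ^ 2 * γ ^ 2 := by
    have : 0 ≤ β * (2 - β) := mul_nonneg hβ0.le (by linarith)
    gcongr
  linarith


open RealInnerProductSpace in
/-- Lemma `lem_Kor2`: one iteration of the modified stochastic Korpelevich method combined
with the random feasibility steps, where `v_k = z 0`, `x_k = z N`,
`b₁ = F(x_k) − G₁`, `b₂ = F(u_{k+1}) − G₂`. -/
theorem stmt_10 {E : Type*} [NormedAddCommGroup E] [InnerProductSpace ℝ E]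
    (Y : Set E) (hYne : Y.Nonempty) (hYconv : Convex ℝ Y)
    (S : Set E) (hSY : S ⊆ Y) (hSne : S.Nonempty) (hSconv : Convex ℝ S)
    (F : E → E)
    (hmono : ∀ x ∈ Y, ∀ y ∈ Y, 0 ≤ ⟪F x - F y, x - y⟫)
    (L M : ℝ) (hL : 0 < L) (hM : 0 ≤ M)
    (hgrowth : ∀ x ∈ Y, ∀ y ∈ Y, ‖F x - F y‖ ≤ L * ‖x - y‖ + M)
    (ζ w₄ β Mg α : ℝ)
    (hζ : 0 < ζ) (hw₄0 : 0 < w₄) (hw₄1 : w₄ < 1)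
    (hβ0 : 0 < β) (hβ2 : β < 2) (hMg : 0 < Mg)
    (hα0 : 0 < α) (hα : α ≤ Real.sqrt (1 - w₄) / (Real.sqrt 2 * L))
    (N : ℕ) (hN : 1 ≤ N)
    (g : ℕ → E → ℝ) (hg : ∀ i ∈ Finset.Icc 1 N, ∀ x ∈ S, g i x ≤ 0)
    (z : ℕ → E) (hzY : ∀ i ≤ N, z i ∈ Y)
    (d : ℕ → E)
    (hd : ∀ i ∈ Finset.Icc 1 N, d i ≠ 0)
    (hdnorm : ∀ i ∈ Finset.Icc 1 N, ‖d i‖ ≤ Mg)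
    (hsub : ∀ i ∈ Finset.Icc 1 N, ∀ y : E,
      max (g i (z (i - 1))) 0 + ⟪d i, y - z (i - 1)⟫ ≤ max (g i y) 0)
    (hzproj : ∀ i ∈ Finset.Icc 1 N, ∀ y ∈ Y,
      ⟪z (i - 1) - (β * (max (g i (z (i - 1))) 0 / ‖d i‖ ^ 2)) • d i - z i, y - z i⟫ ≤ 0)
    (G₁ G₂ : E)
    (u : E) (hu : u ∈ Y)
    (huproj : ∀ y ∈ Y, ⟪z N - α • G₁ - u, y - u⟫ ≤ 0)
    (v' : E) (hv' : v' ∈ Y)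
    (hv'proj : ∀ y ∈ Y, ⟪z N - α • G₂ - v', y - v'⟫ ≤ 0)
    (hk hk1 pk : E)
    (hhk : hk ∈ S)
    (hhk1 : hk1 ∈ S)
    (hhk1proj : ∀ y ∈ S, ⟪hk - α • (F u - G₂) - hk1, y - hk1⟫ ≤ 0)
    (hpk : pk ∈ S) (hpkproj : ∀ y ∈ S, ⟪z N - pk, y - pk⟫ ≤ 0)
    (x : E) (hx : x ∈ S) :
    2 * α * ⟪F x, pk - x⟫
      ≤ ‖z 0 - x‖ ^ 2 - ‖v' - x‖ ^ 2 + ‖hk - x‖ ^ 2 - ‖hk1 - x‖ ^ 2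
        - β * (2 - β) / Mg ^ 2 * ∑ i ∈ Finset.Icc 1 N, (max (g i (z (i - 1))) 0) ^ 2
        + ζ * ‖z N - pk‖ ^ 2
        + 2 * α * ⟪F u - G₂, u - hk⟫
        + ((1 / ζ + 1 / w₄) * ‖F x‖ ^ 2 + 6 * M ^ 2
            + 7 * ‖F u - G₂‖ ^ 2 + 6 * ‖F (z N) - G₁‖ ^ 2) * α ^ 2 := by
  have hfeas : ∀ n ≤ N, ‖z n - x‖ ^ 2 ≤ ‖z 0 - x‖ ^ 2
      - β * (2 - β) / Mg ^ 2 * ∑ i ∈ Finset.Icc 1 n, (max (g i (z (i - 1))) 0) ^ 2 := by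
    intro n
    induction n with
    | zero => intro _; simp
    | succ n ih =>
      intro hn
      have hmem : n + 1 ∈ Finset.Icc 1 N := Finset.mem_Icc.2 ⟨by omega, hn⟩
      have h0 := ih (by omega)
      have hs := hsub _ hmem x
      rw [max_eq_right (hg _ hmem x hx)] at hs
      have := aux_feas (z (n + 1 - 1)) (z (n + 1)) (d (n + 1)) x _ β Mg (le_max_right _ _)
        hβ0 hβ2 hMg (hd _ hmem) (hdnorm _ hmem) hs (hzproj _ hmem x (hSY hx))
      rw [Finset.sum_Icc_succ_top (by omega), mul_add]
      simp only [Nat.add_sub_cancel] at *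
      linarith
  have hF := hfeas N le_rfl
  have hxN := hzY N le_rfl
  have hxY := hSY hx
  generalize z N = a at *
  have hkey := aux_key (a - u) (v' - u) (x - u) G₁ G₂ α
    (by have := huproj v' hv'; rwa [sub_right_comm] at this)
    (by
      have := hv'proj x hxY
      convert this using 2
      · abel
      · abel)
  rw [sub_sub_sub_cancel_right, sub_sub_sub_cancel_right] at hkey
  have hh := aux_h (hk1 - hk) (x - hk) (F u - G₂) α (by
    have := hhk1proj x hx
    convert this using 2
    · abel
    · abel)
  rw [sub_sub_sub_cancel_right, norm_sub_rev x hk] at hh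
  have hy1 := aux_young (F x) (a - u) α w₄ hw₄0
  have hy2 := aux_young (F x) (-(a - pk)) α ζ hζ
  rw [norm_neg] at hy2
  have hm := mul_nonneg hα0.le (hmono u hu x hxY)
  have hG : α ^ 2 * ‖G₁ - G₂‖ ^ 2 ≤ (1 - w₄) * ‖a - u‖ ^ 2
      + α ^ 2 * (6 * M ^ 2 + 6 * ‖F u - G₂‖ ^ 2 + 6 * ‖F a - G₁‖ ^ 2) := by
    have e : G₁ - G₂ = (F a - F u) + (F u - G₂) - (F a - G₁) := by abel
    have hn : ‖G₁ - G₂‖ ≤ L * ‖a - u‖ + M + ‖F u - G₂‖ + ‖F a - G₁‖ := by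
      rw [e]
      have := norm_sub_le ((F a - F u) + (F u - G₂)) (F a - G₁)
      have := norm_add_le (F a - F u) (F u - G₂)
      have := hgrowth a hxN u hu
      linarith
    have hsq : ‖G₁ - G₂‖ ^ 2 ≤ 2 * L ^ 2 * ‖a - u‖ ^ 2
        + (6 * M ^ 2 + 6 * ‖F u - G₂‖ ^ 2 + 6 * ‖F a - G₁‖ ^ 2) := by
      refine (pow_le_pow_left₀ (norm_nonneg _) hn 2).trans ?_
      generalize ‖a - u‖ = r
      generalize ‖F u - G₂‖ = s
      generalize ‖F a - G₁‖ = t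
      nlinarith [sq_nonneg (L * r - (M + s + t)), sq_nonneg (M - s), sq_nonneg (M - t),
        sq_nonneg (s - t)]
    have hαL : α ^ 2 * (2 * L ^ 2) ≤ 1 - w₄ := by
      rw [le_div_iff₀ (by positivity)] at hα
      have := pow_le_pow_left₀ (by positivity) hα 2
      rw [Real.sq_sqrt (by linarith), mul_pow, mul_pow, Real.sq_sqrt (by norm_num)] at this
      exact this
    have h1 := mul_le_mul_of_nonneg_left hsq (sq_nonneg α)
    have h2 := mul_le_mul_of_nonneg_right hαL (sq_nonneg ‖a - u‖)
    linarith
  simp only [inner_sub_left, inner_sub_right, inner_neg_right] at *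
  linarith
end

section
/- Let 0 < q < 1 and let r ≥ 1 be a real number. Then for every natural number k ≥ 1, Σ_{t=1}^k (√(1−q))^{⌈t^{1/r}⌉} ≤ 2^r · Γ(r+1) / (ln(1/(1−q)))^r, where ⌈·⌉ denotes the ceiling function and Γ is the Gamma function. -/
/-- Bound from Lemma `lem_inf_gap_bd`(ii): for `0 < q < 1`, `r ≥ 1`, and `k ≥ 1`,
`∑_{t=1}^k (√(1−q))^{⌈t^{1/r}⌉} ≤ 2^r Γ(r+1) / (ln(1/(1−q)))^r`. -/
theorem stmt_13 (q r : ℝ) (hq0 : 0 < q) (hq1 : q < 1) (hr : 1 ≤ r)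
    (k : ℕ) (hk : 1 ≤ k) :
    ∑ t ∈ Finset.Icc 1 k, Real.sqrt (1 - q) ^ ⌈(t : ℝ) ^ (1 / r)⌉₊
      ≤ (2 : ℝ) ^ r * Real.Gamma (r + 1) / Real.log (1 / (1 - q)) ^ r := by
  have h1 : 0 < 1 - q := by linarith
  have hr0 : 0 < r := by linarith
  have hp : 0 < 1 / r := by positivity
  have hL : 0 < Real.log (1 / (1 - q)) := by
    apply Real.log_pos
    rw [lt_div_iff₀ h1]; linarith
  obtain ⟨b, hb⟩ : ∃ b, b = Real.log (1 / (1 - q)) / 2 := ⟨_, rfl⟩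
  have hb0 : 0 < b := by rw [hb]; positivity
  have hs : Real.sqrt (1 - q) = Real.exp (-b) := by
    rw [hb, Real.sqrt_eq_rpow, Real.rpow_def_of_pos h1, one_div (1 - q), Real.log_inv]
    congr 1; ring
  have hI := integral_exp_neg_mul_rpow hp hb0
  have hG : 0 < Real.Gamma (r + 1) := Real.Gamma_pos_of_pos (by linarith)
  have hR : b ^ (-1 / (1 / r)) * Real.Gamma (1 / (1 / r) + 1)
      = (2 : ℝ) ^ r * Real.Gamma (r + 1) / Real.log (1 / (1 - q)) ^ r := by
    have e1 : -1 / (1 / r) = -r := by field_simp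
    have e2 : 1 / (1 / r) = r := by field_simp
    rw [e1, e2, Real.rpow_neg hb0.le, hb, Real.div_rpow hL.le (by norm_num), inv_div]
    ring
  rw [hR] at hI
  have hint : MeasureTheory.IntegrableOn (fun x : ℝ => Real.exp (-b * x ^ (1 / r)))
      (Set.Ioi 0) := by
    by_contra h
    rw [MeasureTheory.integral_undef h] at hI
    have : 0 < (2 : ℝ) ^ r * Real.Gamma (r + 1) / Real.log (1 / (1 - q)) ^ r := by positivity
    linarith
  have hanti : AntitoneOn (fun x : ℝ => Real.exp (-b * x ^ (1 / r)))
      (Set.Icc (0 : ℝ) (0 + (k : ℕ))) := by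
    intro x hx y hy hxy
    have := Real.rpow_le_rpow hx.1 hxy hp.le
    apply Real.exp_le_exp.2
    nlinarith
  have hsum := hanti.sum_le_integral
  calc ∑ t ∈ Finset.Icc 1 k, Real.sqrt (1 - q) ^ ⌈(t : ℝ) ^ (1 / r)⌉₊
      ≤ ∑ t ∈ Finset.Icc 1 k, Real.exp (-b * (t : ℝ) ^ (1 / r)) := by
        apply Finset.sum_le_sum
        intro t _
        rw [hs, ← Real.exp_nat_mul]
        apply Real.exp_le_exp.2
        nlinarith [Nat.le_ceil ((t : ℝ) ^ (1 / r))]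
    _ = ∑ i ∈ Finset.range k, Real.exp (-b * (0 + ((i + 1 : ℕ) : ℝ)) ^ (1 / r)) := by
        rw [Finset.range_eq_Ico, Finset.sum_Ico_add' (fun i : ℕ => Real.exp (-b * (0 + (i : ℝ)) ^ (1 / r))) 0 k 1]
        simp only [zero_add]
        rfl
    _ ≤ ∫ x in (0 : ℝ)..(0 + (k : ℕ)), Real.exp (-b * x ^ (1 / r)) := hsum
    _ ≤ ∫ x in Set.Ioi (0 : ℝ), Real.exp (-b * x ^ (1 / r)) := by
        rw [intervalIntegral.integral_of_le (by positivity)]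
        apply MeasureTheory.setIntegral_mono_set hint
        · exact Filter.Eventually.of_forall fun x => (Real.exp_pos _).le
        · exact Filter.Eventually.of_forall fun x hx => hx.1
    _ = _ := hI
end

section
/- Let E be a real inner product space, Y ⊆ E a nonempty convex set, and S ⊆ Y a nonempty set. Let (Ω, μ) be a probability space, and let g : Ω → (E → ℝ) be a family of functions with g(ω)(x) ≤ 0 for all ω ∈ Ω and all x ∈ S. Let 0 < β < 2, M_g > 0, c > 0, and z ∈ Y. Suppose that for each ω ∈ Ω there is d(ω) ≠ 0, a subgradient of (g(ω))⁺ at z with ‖d(ω)‖ ≤ M_g, and a point ẑ(ω) that is a projection of z − β·((g(ω))⁺(z)/‖d(ω)‖²)·d(ω) onto Y. Assume the regularity condition dist(z, S)² ≤ c · ∫_Ω ((g(ω))⁺(z))² dμ(ω), and assume that ω ↦ dist(ẑ(ω), S)² and ω ↦ ((g(ω))⁺(z))² are integrable with respect to μ. Then ∫_Ω dist(ẑ(ω), S)² dμ(ω) ≤ (1 − β(2−β)/(c·M_g²)) · dist(z, S)². -/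
open MeasureTheory RealInnerProductSpace in
/-- Expected one-step contraction of the random feasibility update (cf. the proof of
Theorem `thm_inf_updates`): under the regularity condition,
`∫ dist(ẑ(ω), S)² dμ ≤ (1 − β(2−β)/(c M_g²)) dist(z, S)²`. -/
theorem stmt_17 {E : Type*} [NormedAddCommGroup E] [InnerProductSpace ℝ E]
    (Y : Set E) (hYne : Y.Nonempty) (hYconv : Convex ℝ Y)
    (S : Set E) (hSY : S ⊆ Y) (hSne : S.Nonempty)
    {Ω : Type*} [MeasurableSpace Ω] (μ : Measure Ω) [IsProbabilityMeasure μ]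
    (g : Ω → E → ℝ) (hg : ∀ ω : Ω, ∀ x ∈ S, g ω x ≤ 0)
    (β Mg c : ℝ) (hβ0 : 0 < β) (hβ2 : β < 2) (hMg : 0 < Mg) (hc : 0 < c)
    (z : E) (hz : z ∈ Y)
    (d : Ω → E) (hd : ∀ ω : Ω, d ω ≠ 0)
    (hsub : ∀ ω : Ω, ∀ y : E, max (g ω z) 0 + ⟪d ω, y - z⟫ ≤ max (g ω y) 0)
    (hdnorm : ∀ ω : Ω, ‖d ω‖ ≤ Mg)
    (zhat : Ω → E) (hzhatY : ∀ ω : Ω, zhat ω ∈ Y)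
    (hproj : ∀ ω : Ω, ∀ y ∈ Y,
      ⟪z - (β * (max (g ω z) 0 / ‖d ω‖ ^ 2)) • d ω - zhat ω, y - zhat ω⟫ ≤ 0)
    (hreg : Metric.infDist z S ^ 2 ≤ c * ∫ ω, (max (g ω z) 0) ^ 2 ∂μ)
    (hint1 : Integrable (fun ω => Metric.infDist (zhat ω) S ^ 2) μ)
    (hint2 : Integrable (fun ω => (max (g ω z) 0) ^ 2) μ) :
    (∫ ω, Metric.infDist (zhat ω) S ^ 2 ∂μ)
      ≤ (1 - β * (2 - β) / (c * Mg ^ 2)) * Metric.infDist z S ^ 2 := by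
  have key : ∀ ω, Metric.infDist (zhat ω) S ^ 2 + β * (2 - β) / Mg ^ 2 * (max (g ω z) 0) ^ 2
      ≤ Metric.infDist z S ^ 2 := by
    intro ω
    have hpt : ∀ s ∈ S, Metric.infDist (zhat ω) S ^ 2
        + β * (2 - β) / Mg ^ 2 * (max (g ω z) 0) ^ 2 ≤ dist z s ^ 2 := by
      intro s hs
      have h1 := hproj ω s (hSY hs)
      have h2 := hsub ω s
      rw [max_eq_right (hg ω s hs)] at h2
      have hG : 0 ≤ max (g ω z) 0 := le_max_right _ _
      have hdn : 0 < ‖d ω‖ := norm_pos_iff.mpr (hd ω)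
      have hM := hdnorm ω
      generalize max (g ω z) 0 = G at *
      set t := β * (G / ‖d ω‖ ^ 2) with ht
      have ht0 : 0 ≤ t := by positivity
      have h3 : ‖z - t • d ω - s‖ ^ 2 = ‖z - t • d ω - zhat ω‖ ^ 2
          - 2 * ⟪z - t • d ω - zhat ω, s - zhat ω⟫ + ‖s - zhat ω‖ ^ 2 := by
        rw [← norm_sub_sq_real]
        congr 2
        abel
      have h4 : ‖z - t • d ω - s‖ ^ 2 = ‖s - z‖ ^ 2 + 2 * (t * ⟪d ω, s - z⟫)
          + t ^ 2 * ‖d ω‖ ^ 2 := by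
        have : z - t • d ω - s = -((s - z) + t • d ω) := by abel
        rw [this, norm_neg, norm_add_sq_real, inner_smul_right, norm_smul, mul_pow,
          real_inner_comm, Real.norm_eq_abs, sq_abs]
      have h5 : Metric.infDist (zhat ω) S ^ 2 ≤ ‖s - zhat ω‖ ^ 2 := by
        have := Metric.infDist_le_dist_of_mem (x := zhat ω) hs
        rw [dist_comm, dist_eq_norm] at this
        exact pow_le_pow_left₀ Metric.infDist_nonneg this 2
      have h6 : t * ⟪d ω, s - z⟫ ≤ t * (-G) :=
        mul_le_mul_of_nonneg_left (by linarith) ht0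
      have h7 : 2 * (t * G) - t ^ 2 * ‖d ω‖ ^ 2 = β * (2 - β) / ‖d ω‖ ^ 2 * G ^ 2 := by
        rw [ht]
        field_simp
      have h8 : β * (2 - β) / Mg ^ 2 * G ^ 2 ≤ β * (2 - β) / ‖d ω‖ ^ 2 * G ^ 2 := by
        have : 0 ≤ β * (2 - β) := mul_nonneg hβ0.le (by linarith)
        gcongr
      rw [dist_comm, dist_eq_norm]
      have h9 := sq_nonneg ‖z - t • d ω - zhat ω‖
      linarith
    have h := (Metric.le_infDist hSne).2 (fun {s} hs => Real.sqrt_le_iff.2 ⟨dist_nonneg, hpt s hs⟩)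
    exact (Real.sqrt_le_iff.1 h).2
  have hI := integral_mono (hint1.add (hint2.const_mul (β * (2 - β) / Mg ^ 2)))
    (integrable_const (μ := μ) (Metric.infDist z S ^ 2)) key
  simp only [Pi.add_apply] at hI
  rw [integral_add hint1 (hint2.const_mul _), integral_const_mul] at hI
  simp only [integral_const, probReal_univ, one_smul] at hI
  have hK : 0 ≤ β * (2 - β) / (c * Mg ^ 2) :=
    div_nonneg (mul_nonneg hβ0.le (by linarith)) (by positivity)
  have h1 := mul_le_mul_of_nonneg_left hreg hK
  have h2 : β * (2 - β) / (c * Mg ^ 2) * (c * ∫ ω, (max (g ω z) 0) ^ 2 ∂μ)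
      = β * (2 - β) / Mg ^ 2 * ∫ ω, (max (g ω z) 0) ^ 2 ∂μ := by
    field_simp
  linarith
end
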